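/- Fix a strongly connected directed weighted graph G = (V, E, W) with n nodes, a stationary distribution π > 0, and ε > 0 such that P^ε_{G,π} is nonempty. Then the return time entropy J attains a global maximum on P^ε_{G,π}: there exists P* ∈ P^ε_{G,π} such that J(P*) ≥ J(P) for all P ∈ P^ε_{G,π}. -/

import Mathlib

/-!
The entropy is a series of continuous functions of the chain, and the point is to dominate it by a
summable series independent of the chain. Give each state the weight `2 - η ^ d`, where `d` counts
steps to the target along edges of probability at least `ε` and `2 * η ≤ ε`. Off the target this
Lyapunov function decreases in mean by a fixed amount, which leaves room for a discount factor
`x > 1` per unit of travel time; the recursion for the first hitting probabilities then gives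
`F_k(j,j) ≤ C * x⁻ᵏ`, uniformly in the chain. Since `-y log y ≤ 2 √y`, the series is dominated by a
geometric one with ratio `1 / √x`. A positive lower bound on the positive entries of a chain
persists nearby, so the entropy is continuous on irreducible chains and has a maximum on every
nonempty compact set of them.
-/

open scoped BigOperators
open Real

/-- The set of Markov chains `ε`-conforming to a directed graph with adjacency
relation `Adj` and stationary distribution `pivec`. -/
def Conf {n : ℕ} (Adj : Fin n → Fin n → Prop) (pivec : Fin n → ℝ) (ε : ℝ) :
    Set (Matrix (Fin n) (Fin n) ℝ) :=
  {P | (∀ i j, Adj i j → ε ≤ P i j) ∧ (∀ i j, ¬ Adj i j → P i j = 0) ∧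
    (∀ i, ∑ j, P i j = 1) ∧ (∀ j, ∑ i, pivec i * P i j = pivec j)}

/-- The first hitting time probabilities `F_k(i,j)` for a chain `P` with travel
times `W`: `F_k(i,j) = p_{ij}·1{k = w_{ij}} + Σ_{h≠j} p_{ih} F_{k−w_{ih}}(h,j)`
for `k ≥ 1`, and `F_k = 0` for `k ≤ 0`. -/
def IsHittingProb {n : ℕ} (P : Matrix (Fin n) (Fin n) ℝ)
    (W : Matrix (Fin n) (Fin n) ℕ) (F : ℤ → Fin n → Fin n → ℝ) : Prop :=
  (∀ k : ℤ, k ≤ 0 → ∀ i j, F k i j = 0) ∧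
    ∀ k : ℤ, 1 ≤ k → ∀ i j,
      F k i j = (if k = (W i j : ℤ) then P i j else 0) +
        ∑ h : Fin n, if h = j then 0 else P i h * F (k - (W i h : ℤ)) h j

open Filter Set Topology Matrix

/-- The return time entropy `H(T_{ii}) = -∑_{k ≥ 1} F_k(i,i) log F_k(i,i)` of state `i`, as a
function of the first hitting probabilities `F`. The `k`-th summand belongs to the return time
`k + 1`; a divergent series would get the junk value `0`. -/
noncomputable def returnTimeEntropy {n : ℕ} (F : ℤ → Fin n → Fin n → ℝ) (i : Fin n) : ℝ :=
  ∑' k : ℕ, negMulLog (F ((k : ℤ) + 1) i i)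

theorem negMulLog_le_two_mul_sqrt {y : ℝ} (hy : 0 ≤ y) : negMulLog y ≤ 2 * √y := by
  have hlt : negMulLog √y ≤ 1 :=
    (negMulLog_le_one_sub_self (sqrt_nonneg y)).trans (sub_le_self 1 (sqrt_nonneg y))
  calc negMulLog y = 2 * (√y * negMulLog √y) := by
        conv_lhs => rw [← mul_self_sqrt hy, negMulLog_mul]
        ring
    _ ≤ 2 * √y := by gcongr; exact mul_le_of_le_one_right (sqrt_nonneg y) hlt

theorem exists_level_of_forall_reflTransGen {α : Type*} {r : α → α → Prop} {j : α}
    (hr : ∀ i, Relation.ReflTransGen r i j) :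
    ∃ d : α → ℕ, ∀ i ≠ j, ∃ h, r i h ∧ d h < d i := by
  classical
  have hpath (i : α) : ∃ m, ∃ l : List α, l.length = m ∧ (i :: l).IsChain r ∧
      (i :: l).getLast (List.cons_ne_nil i l) = j := by
    obtain ⟨l, hchain, hlast⟩ := List.exists_isChain_cons_of_relationReflTransGen (hr i)
    exact ⟨l.length, l, rfl, hchain, hlast⟩
  refine ⟨fun i => Nat.find (hpath i), fun i hij => ?_⟩
  obtain ⟨l, hlen, hchain, hlast⟩ := Nat.find_spec (hpath i)
  match l with
  | [] => exact absurd hlast hij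
  | h :: t =>
    obtain ⟨hih, htail⟩ := List.isChain_cons_cons.1 hchain
    refine ⟨h, hih, ?_⟩
    calc Nat.find (hpath h) ≤ t.length := Nat.find_min' (hpath h) ⟨t, rfl, htail, hlast⟩
      _ < Nat.find (hpath i) := hlen ▸ Nat.lt_succ_self _

section Lyapunov

variable {ι : Type*} [Fintype ι] [DecidableEq ι]

theorem exists_lyapunov_of_forall_reflTransGen {r : ι → ι → Prop} {ε : ℝ} {j : ι}
    (hr : ∀ i, Relation.ReflTransGen r i j) (hε : 0 < ε) :
    ∃ w : ι → ℝ, (∀ i, 1 ≤ w i) ∧ ∃ δ > 0, ∀ P ∈ rowStochastic ℝ ι,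
      (∀ i h, r i h → ε ≤ P i h) → ∀ i ≠ j, (P *ᵥ w) i + δ ≤ w i := by
  obtain ⟨d, hd⟩ := exists_level_of_forall_reflTransGen hr
  obtain ⟨D, hD⟩ := Finite.exists_le d
  obtain ⟨η, hη0, hη1, hηε⟩ : ∃ η : ℝ, 0 < η ∧ η ≤ 1 ∧ 2 * η ≤ ε :=
    ⟨min 1 (ε / 2), by positivity, min_le_left _ _, by linarith [min_le_right 1 (ε / 2)]⟩
  let u : ι → ℝ := fun i => η ^ d i
  have hu1 (i : ι) : u i ≤ 1 := pow_le_one₀ hη0.le hη1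
  refine ⟨(2 : ℝ) • 1 - u, fun i => ?_, η ^ D, by positivity, fun P hP hPε i hij => ?_⟩
  · simp only [Pi.sub_apply, Pi.smul_apply, Pi.one_apply, smul_eq_mul]
    linarith [hu1 i]
  obtain ⟨h, hih, hlt⟩ := hd i hij
  have hdouble : 2 * u i ≤ (P *ᵥ u) i := calc
    2 * u i ≤ 2 * η ^ (d h + 1) :=
      mul_le_mul_of_nonneg_left (pow_le_pow_of_le_one hη0.le hη1 hlt) zero_le_two
    _ = 2 * η * u h := by ring
    _ ≤ P i h * u h := by gcongr; exact hηε.trans (hPε i h hih)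
    _ ≤ (P *ᵥ u) i := Finset.single_le_sum (f := fun h => P i h * u h)
      (fun h _ => mul_nonneg (nonneg_of_mem_rowStochastic hP) (by positivity)) (Finset.mem_univ h)
  have hmin : η ^ D ≤ u i := pow_le_pow_of_le_one hη0.le hη1 (hD i)
  rw [mulVec_sub, mulVec_smul, one_vecMul_of_mem_rowStochastic hP]
  simp only [Pi.sub_apply, Pi.smul_apply, Pi.one_apply, smul_eq_mul]
  linarith

theorem exists_one_lt_forall_sum_mul_pow_mul_le (W : Matrix ι ι ℕ) {w : ι → ℝ} {δ : ℝ}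
    (hw : ∀ i, 0 ≤ w i) (hδ : 0 < δ) :
    ∃ x > 1, ∀ P ∈ rowStochastic ℝ ι, ∀ i, (P *ᵥ w) i + δ ≤ w i →
      ∑ h, P i h * (x ^ W i h * w h) ≤ w i := by
  obtain ⟨M, hM⟩ := Finite.exists_le fun p : ι × ι => W p.1 p.2
  have hnear : ∀ᶠ x : ℝ in 𝓝[>] 1, ∀ i, x ^ M * (w i - δ) < w i := by
    refine eventually_all.2 fun i => eventually_nhdsWithin_of_eventually_nhds ?_
    refine ContinuousAt.eventually_lt (by fun_prop) continuousAt_const ?_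
    simpa only [one_pow, one_mul] using sub_lt_self (w i) hδ
  obtain ⟨x, hx, hx1 : 1 < x⟩ := (hnear.and self_mem_nhdsWithin).exists
  refine ⟨x, hx1, fun P hP i hdrift => ?_⟩
  calc ∑ h, P i h * (x ^ W i h * w h) ≤ ∑ h, P i h * (x ^ M * w h) :=
        Finset.sum_le_sum fun h _ => mul_le_mul_of_nonneg_left
          (mul_le_mul_of_nonneg_right (pow_le_pow_right₀ hx1.le (hM (i, h))) (hw h))
          (nonneg_of_mem_rowStochastic hP)
    _ = x ^ M * (P *ᵥ w) i := by
        simp only [mulVec, dotProduct, Finset.mul_sum, mul_left_comm]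
    _ ≤ x ^ M * (w i - δ) := by gcongr; linarith
    _ ≤ w i := (hx i).le

end Lyapunov

namespace IsHittingProb

variable {n : ℕ} {P : Matrix (Fin n) (Fin n) ℝ} {W : Matrix (Fin n) (Fin n) ℕ}
  {F : ℤ → Fin n → Fin n → ℝ}

theorem eq_sum_mul (hF : IsHittingProb P W F) {k : ℤ} (hk : 1 ≤ k) (i j : Fin n) :
    F k i j = ∑ h, P i h *
      if h = j then (if k = (W i h : ℤ) then 1 else 0) else F (k - (W i h : ℤ)) h j := by
  have hdirect : (if k = (W i j : ℤ) then P i j else 0) =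
      ∑ h, if h = j then P i h * (if k = (W i h : ℤ) then 1 else 0) else 0 := by
    simp
  rw [hF.2 k hk i j, hdirect, ← Finset.sum_add_distrib]
  refine Finset.sum_congr rfl fun h _ => ?_
  by_cases hj : h = j <;> simp [hj]

theorem nonneg (hF : IsHittingProb P W F) (hP : ∀ i j, 0 ≤ P i j)
    (hPW : ∀ i j, W i j = 0 → P i j = 0) (k : ℤ) (i j : Fin n) : 0 ≤ F k i j := by
  induction k using Int.strongRec (m := 1) generalizing i with
  | lt k hk => exact (hF.1 k (by lia) i j).ge
  | ge k hk ih =>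
    rw [hF.eq_sum_mul hk]
    refine Finset.sum_nonneg fun h _ => ?_
    rcases Nat.eq_zero_or_pos (W i h) with hW | hW
    · simp [hPW i h hW]
    · refine mul_nonneg (hP i h) ?_
      split_ifs
      exacts [zero_le_one, le_rfl, ih _ (by lia) h]

theorem mul_zpow_le (hF : IsHittingProb P W F) (hP : ∀ i j, 0 ≤ P i j)
    (hPW : ∀ i j, W i j = 0 → P i j = 0) {x : ℝ} (hx : 0 < x) {v : Fin n → ℝ}
    (hv : ∀ i, 0 ≤ v i) {j : Fin n}
    (hdrift : ∀ i, ∑ h, P i h * (x ^ W i h * if h = j then 1 else v h) ≤ v i)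
    (k : ℤ) (i : Fin n) : F k i j * x ^ k ≤ v i := by
  induction k using Int.strongRec (m := 1) generalizing i with
  | lt k hk => rw [hF.1 k (by lia) i j, zero_mul]; exact hv i
  | ge k hk ih =>
    refine le_trans ?_ (hdrift i)
    rw [hF.eq_sum_mul hk, Finset.sum_mul]
    refine Finset.sum_le_sum fun h _ => ?_
    rcases Nat.eq_zero_or_pos (W i h) with hW | hW
    · simp [hPW i h hW]
    have hsplit : x ^ k = x ^ W i h * x ^ (k - W i h) := by
      rw [← zpow_natCast, ← zpow_add₀ hx.ne', add_sub_cancel]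
    rw [mul_assoc, hsplit, mul_left_comm (ite _ _ _)]
    refine mul_le_mul_of_nonneg_left (mul_le_mul_of_nonneg_left ?_ (by positivity)) (hP i h)
    split_ifs with hj hkW
    · simp [hkW]
    · simp
    · exact ih _ (by lia) h

theorem le_one (hF : IsHittingProb P W F) (hP : P ∈ rowStochastic ℝ (Fin n))
    (hPW : ∀ i j, W i j = 0 → P i j = 0) (k : ℤ) (i j : Fin n) : F k i j ≤ 1 := by
  have hdrift (i : Fin n) :
      ∑ h, P i h * ((1 : ℝ) ^ W i h * if h = j then 1 else 1) ≤ 1 := by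
    simp [sum_row_of_mem_rowStochastic hP i]
  simpa using hF.mul_zpow_le (fun _ _ => nonneg_of_mem_rowStochastic hP) hPW one_pos
    (fun _ => zero_le_one) hdrift k i

theorem exists_forall_le_mul_pow {r : Fin n → Fin n → Prop} {ε : ℝ} {j : Fin n}
    (hr : ∀ i, Relation.ReflTransGen r i j) (hε : 0 < ε) (W : Matrix (Fin n) (Fin n) ℕ) :
    ∃ C ≥ 0, ∃ q ∈ Ioo (0 : ℝ) 1, ∀ P ∈ rowStochastic ℝ (Fin n),
      (∀ i h, r i h → ε ≤ P i h) → (∀ i h, W i h = 0 → P i h = 0) →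
      ∀ F, IsHittingProb P W F → ∀ k : ℕ, F k j j ≤ C * q ^ k := by
  obtain ⟨w, hw, δ, hδ, hlyap⟩ := exists_lyapunov_of_forall_reflTransGen hr hε
  have hw0 (i : Fin n) : 0 ≤ w i := zero_le_one.trans (hw i)
  obtain ⟨x, hx, hdisc⟩ := exists_one_lt_forall_sum_mul_pow_mul_le W hw0 hδ
  have hx0 : 0 < x := one_pos.trans hx
  let C : ℝ := ∑ h, x ^ W j h * w h
  have hterm (h : Fin n) : 0 ≤ x ^ W j h * w h := mul_nonneg (by positivity) (hw0 h)
  have hC : 0 ≤ C := Finset.sum_nonneg fun h _ => hterm h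
  refine ⟨C, hC, x⁻¹, ⟨by positivity, inv_lt_one_of_one_lt₀ hx⟩, fun P hP hPε hPW F hF k => ?_⟩
  have hP0 (i h : Fin n) : 0 ≤ P i h := nonneg_of_mem_rowStochastic hP
  -- The Lyapunov function has no drift at `j`, so its value there is replaced by the bound `C`.
  let v : Fin n → ℝ := fun i => if i = j then C else w i
  have hv (i : Fin n) : 0 ≤ v i := by
    simp only [v]; split_ifs; exacts [hC, hw0 i]
  have hvw (h : Fin n) : (if h = j then 1 else v h) ≤ w h := by
    simp only [v]; split_ifs; exacts [hw h, le_rfl]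
  have hdrift (i : Fin n) : ∑ h, P i h * (x ^ W i h * if h = j then 1 else v h) ≤ v i := by
    calc _ ≤ ∑ h, P i h * (x ^ W i h * w h) := by
          gcongr with h
          exacts [hP0 i h, hvw h]
      _ ≤ v i := by
          by_cases hij : i = j
          · simp only [v, hij, if_true]
            exact Finset.sum_le_sum fun h _ =>
              mul_le_of_le_one_left (hterm h) (le_one_of_mem_rowStochastic hP)
          · simp only [v, hij, if_false]
            exact hdisc P hP i (hlyap P hP hPε i hij)
  have hbound : F k j j * x ^ k ≤ C := by
    simpa [v] using hF.mul_zpow_le hP0 hPW hx0 hv hdrift k j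
  rwa [inv_pow, ← div_eq_mul_inv, le_div_iff₀ (by positivity)]

end IsHittingProb

section Continuity

variable {n : ℕ} {S : Set (Matrix (Fin n) (Fin n) ℝ)} {W : Matrix (Fin n) (Fin n) ℕ}
  {F : Matrix (Fin n) (Fin n) ℝ → ℤ → Fin n → Fin n → ℝ}

theorem continuousOn_hittingProb (hPW : ∀ P ∈ S, ∀ i j, W i j = 0 → P i j = 0)
    (hF : ∀ P ∈ S, IsHittingProb P W (F P)) (k : ℤ) (i j : Fin n) :
    ContinuousOn (fun P => F P k i j) S := by
  induction k using Int.strongRec (m := 1) generalizing i with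
  | lt k hk => exact continuousOn_const.congr fun P hP => (hF P hP).1 k (by lia) i j
  | ge k hk ih =>
    refine ContinuousOn.congr (continuousOn_finsetSum _ fun h _ => ?_)
      fun P hP => (hF P hP).eq_sum_mul hk i j
    rcases Nat.eq_zero_or_pos (W i h) with hW | hW
    · refine (continuousOn_const (c := (0 : ℝ))).congr fun P hP => ?_
      simp [hPW P hP i h hW]
    · refine ContinuousOn.mul (by fun_prop) ?_
      split_ifs
      exacts [continuousOn_const, continuousOn_const, ih _ (by lia) h]

theorem continuousOn_returnTimeEntropy_of_le {r : Fin n → Fin n → Prop} {ε : ℝ} {j : Fin n}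
    (hr : ∀ i, Relation.ReflTransGen r i j) (hε : 0 < ε)
    (hS : S ⊆ rowStochastic ℝ (Fin n)) (hSε : ∀ P ∈ S, ∀ i h, r i h → ε ≤ P i h)
    (hPW : ∀ P ∈ S, ∀ i h, W i h = 0 → P i h = 0)
    (hF : ∀ P ∈ S, IsHittingProb P W (F P)) :
    ContinuousOn (fun P => returnTimeEntropy (F P) j) S := by
  obtain ⟨C, hC, q, ⟨hq0, hq1⟩, hgeom⟩ := IsHittingProb.exists_forall_le_mul_pow hr hε W
  have hsqrt : √q < 1 := (sqrt_lt' one_pos).2 (by simpa using hq1)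
  have hsummable : Summable fun k : ℕ => 2 * (√C * √q ^ (k + 1)) :=
    (((summable_nat_add_iff 1).2
      (summable_geometric_of_lt_one (sqrt_nonneg q) hsqrt)).mul_left _).mul_left _
  refine continuousOn_tsum (fun k => ?_) hsummable fun k P hP => ?_
  · exact continuous_negMulLog.comp_continuousOn (continuousOn_hittingProb hPW hF _ j j)
  have hnonneg : 0 ≤ F P (k + 1) j j :=
    (hF P hP).nonneg (fun _ _ => nonneg_of_mem_rowStochastic (hS hP)) (hPW P hP) _ j j
  have hle_one : F P (k + 1) j j ≤ 1 := (hF P hP).le_one (hS hP) (hPW P hP) _ j j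
  have hle : F P (k + 1) j j ≤ C * q ^ (k + 1) :=
    mod_cast hgeom P (hS hP) (hSε P hP) (hPW P hP) (F P) (hF P hP) (k + 1)
  calc ‖negMulLog (F P (k + 1) j j)‖ = negMulLog (F P (k + 1) j j) :=
        norm_of_nonneg (negMulLog_nonneg hnonneg hle_one)
    _ ≤ 2 * √(F P (k + 1) j j) := negMulLog_le_two_mul_sqrt hnonneg
    _ ≤ 2 * √((√C * √q ^ (k + 1)) ^ 2) := by
        gcongr
        rwa [mul_pow, pow_right_comm, sq_sqrt hC, sq_sqrt hq0.le]
    _ = 2 * (√C * √q ^ (k + 1)) := by rw [sqrt_sq (by positivity)]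

theorem exists_pos_eventually_le_of_pos {ι κ : Type*} [Finite ι] [Finite κ] (A : Matrix ι κ ℝ) :
    ∃ ε > 0, ∀ᶠ P in 𝓝 A, ∀ i j, 0 < A i j → ε ≤ P i j := by
  have hsmall : ∀ᶠ ε : ℝ in 𝓝[>] 0, ∀ i j, 0 < A i j → ε < A i j :=
    eventually_nhdsWithin_of_eventually_nhds <| eventually_all.2 fun i => eventually_all.2 fun j =>
      eventually_imp_distrib_left.2 fun hij => eventually_lt_nhds hij
  obtain ⟨ε, hεA, hε⟩ := (hsmall.and self_mem_nhdsWithin).exists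
  refine ⟨ε, hε, eventually_all.2 fun i => eventually_all.2 fun j =>
    eventually_imp_distrib_left.2 fun hij => ?_⟩
  have hcont : Continuous fun P : Matrix ι κ ℝ => P i j := by fun_prop
  exact hcont.continuousAt.eventually_const_le (hεA i j hij)

theorem continuousOn_returnTimeEntropy {j : Fin n} (hS : S ⊆ rowStochastic ℝ (Fin n))
    (hreach : ∀ P ∈ S, ∀ i, Relation.ReflTransGen (fun a b => 0 < P a b) i j)
    (hPW : ∀ P ∈ S, ∀ i h, W i h = 0 → P i h = 0)
    (hF : ∀ P ∈ S, IsHittingProb P W (F P)) :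
    ContinuousOn (fun P => returnTimeEntropy (F P) j) S := by
  intro A hA
  obtain ⟨ε, hε, hU⟩ := exists_pos_eventually_le_of_pos A
  have hlocal : ContinuousOn (fun P => returnTimeEntropy (F P) j)
      (S ∩ {P | ∀ i h, 0 < A i h → ε ≤ P i h}) :=
    continuousOn_returnTimeEntropy_of_le (hreach A hA) hε (fun P hP => hS hP.1)
      (fun P hP => hP.2) (fun P hP => hPW P hP.1) (fun P hP => hF P hP.1)
  exact (continuousWithinAt_inter hU).1 (hlocal A ⟨hA, mem_of_mem_nhds hU⟩)

end Continuity

namespace Conf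

variable {n : ℕ} {Adj : Fin n → Fin n → Prop} {pivec : Fin n → ℝ} {ε : ℝ}

theorem subset_rowStochastic (hε : 0 ≤ ε) :
    Conf Adj pivec ε ⊆ (rowStochastic ℝ (Fin n) : Set (Matrix (Fin n) (Fin n) ℝ)) := by
  rintro P ⟨hAdj, hNotAdj, hrow, -⟩
  refine mem_rowStochastic_iff_sum.2 ⟨fun i j => ?_, hrow⟩
  by_cases hij : Adj i j
  exacts [hε.trans (hAdj i j hij), (hNotAdj i j hij).ge]

theorem isClosed : IsClosed (Conf Adj pivec ε) := by
  simp only [Conf, ofPred_and, ofPred_forall]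
  refine .inter ?_ (.inter ?_ (.inter ?_ ?_))
  · exact isClosed_iInter fun i => isClosed_iInter fun j => isClosed_iInter fun _ =>
      isClosed_le (by fun_prop) (by fun_prop)
  · exact isClosed_iInter fun i => isClosed_iInter fun j => isClosed_iInter fun _ =>
      isClosed_eq (by fun_prop) (by fun_prop)
  · exact isClosed_iInter fun i => isClosed_eq (by fun_prop) (by fun_prop)
  · exact isClosed_iInter fun j => isClosed_eq (by fun_prop) (by fun_prop)

theorem isCompact (hε : 0 ≤ ε) : IsCompact (Conf Adj pivec ε) := by
  have hsimplices : IsCompact (univ.pi fun _ : Fin n => stdSimplex ℝ (Fin n)) :=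
    isCompact_univ_pi fun _ => isCompact_stdSimplex ℝ (Fin n)
  refine IsCompact.of_isClosed_subset (X := Matrix (Fin n) (Fin n) ℝ) hsimplices isClosed
    fun P hP i _ => ?_
  obtain ⟨hnonneg, hrow⟩ := mem_rowStochastic_iff_sum.1 (subset_rowStochastic hε hP)
  exact ⟨hnonneg i, hrow i⟩

theorem reflTransGen_pos (hε : 0 < ε) (hconn : ∀ i j, Relation.ReflTransGen Adj i j) :
    ∀ P ∈ Conf Adj pivec ε, ∀ i j, Relation.ReflTransGen (fun a b => 0 < P a b) i j :=
  fun _ hP i j => Relation.ReflTransGen.mono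
    (fun a b hab => hε.trans_le (hP.1 a b hab)) i j (hconn i j)

theorem eq_zero_of_time_eq_zero {W : Matrix (Fin n) (Fin n) ℕ}
    (hW : ∀ i j, Adj i j → 1 ≤ W i j) :
    ∀ P ∈ Conf Adj pivec ε, ∀ i j, W i j = 0 → P i j = 0 :=
  fun _ hP i j hzero => hP.2.1 i j fun hij => Nat.ne_of_gt (hW i j hij) hzero

end Conf

theorem return_time_entropy_attains_maximum_general {n : ℕ}
    {S : Set (Matrix (Fin n) (Fin n) ℝ)} {W : Matrix (Fin n) (Fin n) ℕ}
    {F : Matrix (Fin n) (Fin n) ℝ → ℤ → Fin n → Fin n → ℝ}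
    (hcompact : IsCompact S) (hne : S.Nonempty) (hS : S ⊆ rowStochastic ℝ (Fin n))
    (hirr : ∀ P ∈ S, ∀ i j, Relation.ReflTransGen (fun a b => 0 < P a b) i j)
    (hPW : ∀ P ∈ S, ∀ i j, W i j = 0 → P i j = 0)
    (hF : ∀ P ∈ S, IsHittingProb P W (F P)) (c : Fin n → ℝ) :
    ∃ Pstar ∈ S, ∀ P ∈ S, ∑ i, c i * returnTimeEntropy (F P) i ≤
      ∑ i, c i * returnTimeEntropy (F Pstar) i := by
  have hcont : ContinuousOn (fun P => ∑ i, c i * returnTimeEntropy (F P) i) S :=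
    continuousOn_finsetSum _ fun i _ => continuousOn_const.mul
      (continuousOn_returnTimeEntropy hS (fun P hP a => hirr P hP a i) hPW hF)
  exact hcompact.exists_isMaxOn hne hcont

/-- the return time entropy
`J(P) = Σ_i π_i (−Σ_{k≥1} F_k(i,i) log F_k(i,i))` attains a global maximum on
the `ε`-conforming set. -/
theorem return_time_entropy_attains_maximum {n : ℕ}
    (Adj : Fin n → Fin n → Prop) (W : Matrix (Fin n) (Fin n) ℕ)
    (pivec : Fin n → ℝ) (ε : ℝ)
    (hconn : ∀ i j, Relation.ReflTransGen Adj i j)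
    (hW1 : ∀ i j, Adj i j → 1 ≤ W i j)
    (hW0 : ∀ i j, ¬ Adj i j → W i j = 0)
    (hpi : ∀ i, 0 < pivec i) (hpisum : ∑ i, pivec i = 1)
    (hε : 0 < ε) (hne : (Conf Adj pivec ε).Nonempty)
    (F : Matrix (Fin n) (Fin n) ℝ → ℤ → Fin n → Fin n → ℝ)
    (hF : ∀ P ∈ Conf Adj pivec ε, IsHittingProb P W (F P)) :
    ∃ Pstar ∈ Conf Adj pivec ε,
      ∀ P ∈ Conf Adj pivec ε,
        (∑ i : Fin n, pivec i * ∑' k : ℕ, Real.negMulLog (F P ((k : ℤ) + 1) i i)) ≤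
          ∑ i : Fin n, pivec i * ∑' k : ℕ, Real.negMulLog (F Pstar ((k : ℤ) + 1) i i) := by
  exact return_time_entropy_attains_maximum_general (Conf.isCompact hε.le) hne
    (Conf.subset_rowStochastic hε.le) (Conf.reflTransGen_pos hε hconn)
    (Conf.eq_zero_of_time_eq_zero hW1) hF pivec
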